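/- (Vector Lipschitz constant, probit case, c-subproblem.) The gradient of f_c is Lipschitz continuous on ℝ^K with Lipschitz constant σ_max(W)²; that is, for all x, y ∈ ℝ^K, ‖∇f_c(x) − ∇f_c(y)‖₂ ≤ σ_max(W)²·‖x − y‖₂. -/

import Mathlib

/-!
Write `h = 𝒩 / Φ_pro` for the logarithmic derivative of `Φ_pro`. Since `𝒩' = -t 𝒩`, one has
`h' = -h (t + h)`, and everything rests on `0 ≤ h (t + h) ≤ 1`. Both inequalities express the
positivity of an integral against the Gaussian weight on `(-∞, z]`, evaluated through the truncated
moments `∫ t 𝒩 = -𝒩(z)` and `∫ t² 𝒩 = Φ_pro(z) - z 𝒩(z)`: the lower bound comes from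
`∫ (z - t) 𝒩 ≥ 0`, and the upper bound from the nonnegativity of the variance of a standard normal
variable conditioned on `(-∞, z]`. Hence `h` is `1`-Lipschitz (`probitHazard_lipschitz`).

With `s_i = 2 Y_i - 1 = ±1`, the gradient of `f_c` is `-Wᵀ u(x)`, where
`u_i(x) = s_i h(s_i (W x)_i)`. Therefore
`‖∇f_c(x) - ∇f_c(y)‖ ≤ ‖Wᵀ‖ ‖u(x) - u(y)‖ ≤ ‖W‖ ‖W (x - y)‖ ≤ ‖W‖² ‖x - y‖`.
-/

open scoped RealInnerProductSpace

/-- The standard normal probability density function. -/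
noncomputable def stdN (x : ℝ) : ℝ := (Real.sqrt (2 * Real.pi))⁻¹ * Real.exp (-x ^ 2 / 2)

/-- The standard normal cumulative distribution function (inverse probit link). -/
noncomputable def PhiPro (x : ℝ) : ℝ := ∫ t in Set.Iic x, stdN t

open MeasureTheory Set Filter Topology

lemma stdN_pos (x : ℝ) : 0 < stdN x := by
  unfold stdN
  positivity

lemma hasDerivAt_stdN (x : ℝ) : HasDerivAt stdN (-(x * stdN x)) x := by
  have h : HasDerivAt (fun y : ℝ => -y ^ 2 / 2) (-x) x := by
    refine (((hasDerivAt_pow 2 x).fun_neg).div_const 2).congr_deriv ?_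
    simp
    ring
  refine ((h.exp).const_mul ((Real.sqrt (2 * Real.pi))⁻¹)).congr_deriv ?_
  unfold stdN
  ring

lemma continuous_stdN : Continuous stdN := by
  unfold stdN
  fun_prop

lemma integrable_pow_mul_stdN (n : ℕ) : Integrable (fun t : ℝ => t ^ n * stdN t) := by
  have h := (integrable_rpow_mul_exp_neg_mul_sq (b := 1 / 2) (by norm_num) (s := n)
    (by have : (0 : ℝ) ≤ n := n.cast_nonneg
        linarith)).const_mul ((Real.sqrt (2 * Real.pi))⁻¹)
  refine h.congr (ae_of_all _ fun t => ?_)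
  simp only [Real.rpow_natCast, stdN]
  rw [show -(1 / 2) * t ^ 2 = -t ^ 2 / 2 by ring]
  ring

lemma integrable_stdN : Integrable stdN := by
  simpa using integrable_pow_mul_stdN 0

lemma integrable_mul_stdN : Integrable (fun t : ℝ => t * stdN t) := by
  simpa using integrable_pow_mul_stdN 1

lemma PhiPro_pos (z : ℝ) : 0 < PhiPro z := by
  unfold PhiPro
  rw [setIntegral_pos_iff_support_of_nonneg_ae (ae_of_all _ fun t => (stdN_pos t).le)
    integrable_stdN.integrableOn]
  have : Function.support stdN = univ := by
    ext t
    simp [(stdN_pos t).ne']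
  simp [this]

lemma hasDerivAt_PhiPro (z : ℝ) : HasDerivAt PhiPro (stdN z) z := by
  have h : PhiPro = fun x => PhiPro 0 + ∫ t in (0 : ℝ)..x, stdN t := by
    funext x
    rw [← intervalIntegral.integral_Iic_sub_Iic integrable_stdN.integrableOn
      integrable_stdN.integrableOn]
    unfold PhiPro
    ring
  rw [h]
  exact (continuous_stdN.integral_hasStrictDerivAt 0 z).hasDerivAt.const_add _

/-- First truncated moment of the standard normal distribution. -/
lemma integral_Iic_mul_stdN (z : ℝ) : ∫ t in Iic z, t * stdN t = -stdN z := by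
  have hd : ∀ x ∈ Iic z, HasDerivAt (fun t => -stdN t) (x * stdN x) x := fun x _ => by
    simpa using (hasDerivAt_stdN x).fun_neg
  have hi : IntegrableOn (fun t => t * stdN t) (Iic z) := integrable_mul_stdN.integrableOn
  have := integral_Iic_of_hasDerivAt_of_tendsto' hd hi
    (tendsto_zero_of_hasDerivAt_of_integrableOn_Iic hd hi integrable_stdN.neg.integrableOn)
  simpa using this

/-- Second truncated moment of the standard normal distribution. -/
lemma integral_Iic_sq_mul_stdN (z : ℝ) :
    ∫ t in Iic z, t ^ 2 * stdN t = PhiPro z - z * stdN z := by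
  have hd : ∀ x ∈ Iic z,
      HasDerivAt (fun t => -(t * stdN t)) (x ^ 2 * stdN x - stdN x) x := fun x _ => by
    refine (((hasDerivAt_id x).mul (hasDerivAt_stdN x)).fun_neg).congr_deriv ?_
    simp only [id]
    ring
  have hi : IntegrableOn (fun t => t ^ 2 * stdN t - stdN t) (Iic z) :=
    ((integrable_pow_mul_stdN 2).sub integrable_stdN).integrableOn
  have := integral_Iic_of_hasDerivAt_of_tendsto' hd hi
    (tendsto_zero_of_hasDerivAt_of_integrableOn_Iic hd hi integrable_mul_stdN.neg.integrableOn)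
  rw [integral_sub (integrable_pow_mul_stdN 2).integrableOn integrable_stdN.integrableOn] at this
  unfold PhiPro
  linarith

lemma mul_PhiPro_add_stdN_nonneg (z : ℝ) : 0 ≤ z * PhiPro z + stdN z := by
  have h : 0 ≤ ∫ t in Iic z, (z * stdN t - t * stdN t) :=
    setIntegral_nonneg measurableSet_Iic fun t ht => by
      rw [← sub_mul]
      exact mul_nonneg (sub_nonneg.2 ht) (stdN_pos t).le
  rw [integral_sub (integrable_stdN.const_mul z).integrableOn integrable_mul_stdN.integrableOn,
    integral_const_mul, integral_Iic_mul_stdN] at h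
  unfold PhiPro
  linarith

/-- Up to the factor `Φ_pro(z)²`, this says that the variance of a standard normal variable
conditioned on `(-∞, z]` is nonnegative. -/
lemma stdN_mul_le_PhiPro_sq (z : ℝ) :
    stdN z * (z * PhiPro z + stdN z) ≤ PhiPro z ^ 2 := by
  set P := PhiPro z with hP
  set N := stdN z with hN
  -- The conditional mean is `-N / P`; the centred variable is scaled by `P` to avoid division.
  have h : 0 ≤ ∫ t in Iic z,
      (P ^ 2 * (t ^ 2 * stdN t) + 2 * P * N * (t * stdN t) + N ^ 2 * stdN t) :=
    setIntegral_nonneg measurableSet_Iic fun t _ => by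
      have := mul_nonneg (sq_nonneg (P * t + N)) (stdN_pos t).le
      linarith
  have h2 : Integrable (fun t => P ^ 2 * (t ^ 2 * stdN t)) (volume.restrict (Iic z)) :=
    ((integrable_pow_mul_stdN 2).const_mul _).integrableOn
  have h1 : Integrable (fun t => 2 * P * N * (t * stdN t)) (volume.restrict (Iic z)) :=
    (integrable_mul_stdN.const_mul _).integrableOn
  have h0 : Integrable (fun t => N ^ 2 * stdN t) (volume.restrict (Iic z)) :=
    (integrable_stdN.const_mul _).integrableOn
  rw [integral_add (h2.fun_add h1) h0, integral_add h2 h1, integral_const_mul, integral_const_mul,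
    integral_const_mul, integral_Iic_mul_stdN, integral_Iic_sq_mul_stdN,
    show ∫ t in Iic z, stdN t = P from rfl, ← hN, ← hP] at h
  have hPpos : 0 < P := PhiPro_pos z
  have hprod : 0 ≤ P * (P ^ 2 - N * (z * P + N)) := by linarith
  linarith [nonneg_of_mul_nonneg_right hprod hPpos]

/-- The ratio `𝒩 / Φ_pro`, i.e. the derivative of `log Φ_pro`. -/
noncomputable def probitHazard (z : ℝ) : ℝ := stdN z / PhiPro z

lemma hasDerivAt_log_PhiPro (z : ℝ) :
    HasDerivAt (fun t => Real.log (PhiPro t)) (probitHazard z) z :=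
  (hasDerivAt_PhiPro z).log (PhiPro_pos z).ne'

lemma probitHazard_lipschitz (a b : ℝ) : |probitHazard a - probitHazard b| ≤ |a - b| := by
  have hd : ∀ z ∈ (univ : Set ℝ), HasDerivWithinAt probitHazard
      (-(stdN z * (z * PhiPro z + stdN z) / PhiPro z ^ 2)) univ z := fun z _ => by
    refine (((hasDerivAt_stdN z).fun_div (hasDerivAt_PhiPro z)
      (PhiPro_pos z).ne').congr_deriv ?_).hasDerivWithinAt
    ring
  have hb : ∀ z ∈ (univ : Set ℝ),
      ‖-(stdN z * (z * PhiPro z + stdN z) / PhiPro z ^ 2)‖ ≤ 1 := fun z _ => by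
    have hP := PhiPro_pos z
    rw [norm_neg, Real.norm_of_nonneg (div_nonneg
      (mul_nonneg (stdN_pos z).le (mul_PhiPro_add_stdN_nonneg z)) (by positivity)),
      div_le_one (by positivity)]
    exact stdN_mul_le_PhiPro_sq z
  simpa using convex_univ.norm_image_sub_le_of_norm_hasDerivWithin_le hd hb
    (mem_univ b) (mem_univ a)

/-- Vector Lipschitz constant, probit case, `c`-subproblem: the gradient of
`f_c(c) = -∑_i log Φ_pro((2Y_i - 1)⟨w_i, c⟩)` is Lipschitz continuous on `ℝ^K`
with Lipschitz constant `σ_max(W)²`, where `σ_max(W)` is the largest singular value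
(the ℓ²-operator norm) of the `Q × K` matrix `W` whose `i`-th row is `w_iᵀ`. -/
theorem stmt12 (K Q : ℕ) (Y : Fin Q → ℝ) (hY : ∀ i, Y i = 0 ∨ Y i = 1)
    (w : Fin Q → EuclideanSpace ℝ (Fin K))
    (fc : EuclideanSpace ℝ (Fin K) → ℝ)
    (hfc : ∀ c, fc c = -(∑ i, Real.log (PhiPro ((2 * Y i - 1) * ⟪w i, c⟫))))
    (σmax : ℝ)
    (hσ : σmax = ‖LinearMap.toContinuousLinearMap
      (Matrix.toEuclideanLin (Matrix.of fun i k => w i k) :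
        EuclideanSpace ℝ (Fin K) →ₗ[ℝ] EuclideanSpace ℝ (Fin Q))‖) :
    ∀ x y : EuclideanSpace ℝ (Fin K),
      ‖gradient fc x - gradient fc y‖ ≤ σmax ^ 2 * ‖x - y‖ := by
  intro x y
  set W : EuclideanSpace ℝ (Fin K) →L[ℝ] EuclideanSpace ℝ (Fin Q) :=
    LinearMap.toContinuousLinearMap
      (Matrix.toEuclideanLin (Matrix.of fun i k => w i k) :
        EuclideanSpace ℝ (Fin K) →ₗ[ℝ] EuclideanSpace ℝ (Fin Q)) with hW
  have hWi : ∀ c i, W c i = ⟪w i, c⟫ := fun c i => by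
    simp [hW, Matrix.toLpLin_apply, Matrix.mulVec, dotProduct, PiLp.inner_apply, mul_comm]
  have hs : ∀ i, |2 * Y i - 1| = 1 := fun i => by
    rcases hY i with h | h <;> rw [h] <;> norm_num
  set u : EuclideanSpace ℝ (Fin K) → EuclideanSpace ℝ (Fin Q) := fun c =>
    WithLp.toLp 2 fun i => (2 * Y i - 1) * probitHazard ((2 * Y i - 1) * ⟪w i, c⟫) with hu
  have hgrad : ∀ c, gradient fc c = -(W.adjoint (u c)) := fun c => by
    refine HasGradientAt.gradient ?_
    rw [hasGradientAt_iff_hasFDerivAt]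
    have hterm : ∀ i ∈ (Finset.univ : Finset (Fin Q)), HasFDerivAt
        (fun c => Real.log (PhiPro ((2 * Y i - 1) * ⟪w i, c⟫)))
        (probitHazard ((2 * Y i - 1) * ⟪w i, c⟫) • ((2 * Y i - 1) • innerSL ℝ (w i))) c :=
      fun i _ => (hasDerivAt_log_PhiPro _).comp_hasFDerivAt c
        (((innerSL ℝ (w i)).hasFDerivAt).const_mul (2 * Y i - 1))
    have h := (HasFDerivAt.fun_sum hterm).fun_neg
    rw [show fc = fun c => -(∑ i, Real.log (PhiPro ((2 * Y i - 1) * ⟪w i, c⟫))) from funext hfc]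
    refine h.congr_fderiv ?_
    ext v
    simp only [map_neg, neg_apply, InnerProductSpace.toDual_apply_apply,
      ContinuousLinearMap.adjoint_inner_left, sum_apply,
      smul_apply, innerSL_apply_apply, smul_eq_mul]
    rw [PiLp.inner_apply]
    simp only [hWi, hu, RCLike.inner_apply, conj_trivial]
    congr 1
    refine Finset.sum_congr rfl fun i _ => ?_
    ring
  have hulip : ‖u x - u y‖ ≤ ‖W (x - y)‖ := by
    rw [EuclideanSpace.norm_eq, EuclideanSpace.norm_eq]
    refine Real.sqrt_le_sqrt (Finset.sum_le_sum fun i _ => ?_)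
    refine pow_le_pow_left₀ (norm_nonneg _) ?_ 2
    rw [hWi, Real.norm_eq_abs, Real.norm_eq_abs]
    simp only [hu, PiLp.sub_apply]
    rw [← mul_sub, abs_mul, hs i, one_mul]
    refine (probitHazard_lipschitz _ _).trans ?_
    rw [← mul_sub, abs_mul, hs i, one_mul, ← inner_sub_right]
  rw [hgrad, hgrad, neg_sub_neg, ← map_sub, norm_sub_rev x y]
  have hnorm : ‖W.adjoint‖ = σmax := by
    rw [hσ]
    exact LinearIsometryEquiv.norm_map _ _
  calc ‖W.adjoint (u y - u x)‖ ≤ ‖W.adjoint‖ * ‖u y - u x‖ := W.adjoint.le_opNorm _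
    _ ≤ σmax * ‖W (x - y)‖ := by
        rw [hnorm, norm_sub_rev]
        exact mul_le_mul_of_nonneg_left hulip (hσ ▸ norm_nonneg _)
    _ ≤ σmax * (σmax * ‖y - x‖) := by
        rw [norm_sub_rev y x]
        exact mul_le_mul_of_nonneg_left (hσ ▸ W.le_opNorm _) (hσ ▸ norm_nonneg _)
    _ = σmax ^ 2 * ‖y - x‖ := by ring
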